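/- arXiv:1511.06606 — 2 statements merged into one kernel-verified Lean document; each statement's English description precedes it below -/
import Mathlib

section
/- Let X ∈ {0,1}^{m×n} be an interval matrix, let V ∈ {0,1}^{n×k} be a matrix with exactly one entry equal to 1 in each row and zeros elsewhere, let t ∈ ℤ^k be an integer vector, and let v ∈ ℤ be an integer. Then every extreme point (vertex) of the polyhedron P = {w ∈ ℝ^n : X w ≥ v·𝟙, 0 ≤ w ≤ 𝟙, w ≤ V t} has all coordinates in {0,1}. -/
noncomputable section

/-- A 0–1 matrix is an interval matrix if each column's set of rows with entry 1 is a
block of consecutive indices: entries are 0 or 1, and the support of each column is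
order-convex. -/
def IsIntervalMatrix {m n : ℕ} (X : Matrix (Fin m) (Fin n) ℝ) : Prop :=
  (∀ i j, X i j = 0 ∨ X i j = 1) ∧
  ∀ j i₁ i₂ i₃, i₁ ≤ i₂ → i₂ ≤ i₃ → X i₁ j = 1 → X i₃ j = 1 → X i₂ j = 1

/-!
If `w` is an extreme point, the only direction `d` that vanishes on all constraints tight at `w`
is `d = 0`. Suppose some coordinate of `w` is not an integer and keep only the rows of `X` tight at
`w` and the columns where `w` is not an integer. Replacing the rows, padded by a zero row at both
ends, by their consecutive differences turns every column into the signed incidence vector of an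
edge: `+1` where its block of ones starts, `-1` right after it ends. The net flow of `w` through
every vertex of this graph is an integer while no single edge carries an integer, so there are no
leaves, hence at least as many edges as non-isolated vertices. Such a graph carries a nonzero
circulation, and this is a direction `d ≠ 0` of the forbidden kind.
-/

open Filter Topology
open scoped Matrix

theorem card_nonzero_rows_le_card_columns {ρ ι R : Type*} [Finite ρ] [Finite ι] [Zero R]
    {D : Matrix ρ ι R}
    (hcol : ∀ j, {r | D r j ≠ 0}.ncard ≤ 2)
    (hrow : ∀ r j, D r j ≠ 0 → ∃ j' ≠ j, D r j' ≠ 0) :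
    Nat.card {r // D r ≠ 0} ≤ Nat.card ι := by
  classical
  have := Fintype.ofFinite ρ
  have := Fintype.ofFinite ι
  have hdouble : Fintype.card {r // D r ≠ 0} * 2 ≤ Fintype.card ι * 2 := by
    refine Finset.card_mul_le_card_mul (fun r j ↦ D r.1 j ≠ 0) (fun r _ ↦ ?_) fun j _ ↦ ?_
    · obtain ⟨j, hj⟩ := Function.ne_iff.1 r.2
      obtain ⟨j', hne, hj'⟩ := hrow r j hj
      exact Finset.one_lt_card.2 ⟨j', by simpa using hj', j, by simpa using hj, hne⟩
    · rw [← Set.ncard_coe_finset, ← Set.ncard_image_of_injective _ Subtype.val_injective]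
      refine (Set.ncard_le_ncard ?_ (Set.toFinite _)).trans (hcol j)
      rintro _ ⟨r, hr, rfl⟩
      simpa using hr
  rw [Nat.card_eq_fintype_card, Nat.card_eq_fintype_card]
  lia

section Kernel

variable {K ρ ι : Type*} [Field K] [Fintype ρ] [Fintype ι]

theorem exists_mulVec_eq_zero_of_vecMul_eq_zero {M : Matrix ρ ι K} {y : ρ → K}
    (hcard : Fintype.card ρ ≤ Fintype.card ι) (hy : y ≠ 0) (hyM : y ᵥ* M = 0) :
    ∃ d ≠ 0, M *ᵥ d = 0 := by
  by_contra! hker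
  have hinj : Function.Injective M.mulVecLin :=
    (injective_iff_map_eq_zero _).2 fun d hd ↦ by_contra fun hne ↦ hker d hne hd
  have hfinrank : Module.finrank K (ι → K) = Module.finrank K (ρ → K) :=
    le_antisymm (LinearMap.finrank_le_finrank_of_injective hinj) (by simpa using hcard)
  have hsurj : Function.Surjective M.mulVecLin :=
    (LinearMap.injective_iff_surjective_of_finrank_eq_finrank hfinrank).1 hinj
  refine hy (dotProduct_eq_zero y fun z ↦ ?_)
  obtain ⟨x, rfl⟩ := hsurj z
  rw [Matrix.mulVecLin_apply, Matrix.dotProduct_mulVec, hyM, zero_dotProduct]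

theorem exists_mulVec_eq_zero_of_no_leaf [Nonempty ι] {D : Matrix ρ ι K}
    (hsum : ∀ j, ∑ r, D r j = 0) (hcol : ∀ j, {r | D r j ≠ 0}.ncard ≤ 2)
    (hrow : ∀ r j, D r j ≠ 0 → ∃ j' ≠ j, D r j' ≠ 0) :
    ∃ d ≠ 0, D *ᵥ d = 0 := by
  classical
  by_cases hD : D = 0
  · exact ⟨1, one_ne_zero, by rw [hD, Matrix.zero_mulVec]⟩
  obtain ⟨r₀, hr₀⟩ : ∃ r, D r ≠ 0 := Function.ne_iff.1 hD
  have : Nonempty {r // D r ≠ 0} := ⟨r₀, hr₀⟩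
  have hsum' : (1 : {r // D r ≠ 0} → K) ᵥ* D.submatrix (↑) id = 0 := by
    ext j
    rw [Matrix.vecMul, one_dotProduct, Pi.zero_apply, ← hsum j]
    refine Fintype.sum_of_injective _ Subtype.val_injective _ _ (fun r hr ↦ ?_) fun _ ↦ rfl
    have hzero : D r = 0 := by simpa using hr
    exact congrFun hzero j
  obtain ⟨d, hd, hDd⟩ := exists_mulVec_eq_zero_of_vecMul_eq_zero
    (by simpa only [Nat.card_eq_fintype_card] using card_nonzero_rows_le_card_columns hcol hrow)
    one_ne_zero hsum'
  refine ⟨d, hd, funext fun r ↦ ?_⟩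
  by_cases hr : D r = 0
  · rw [Matrix.mulVec, hr, zero_dotProduct, Pi.zero_apply]
  · exact congrFun hDd ⟨r, hr⟩

end Kernel

section PaddedDiff

variable {p : ℕ}

/-- The sequence `x 0, …, x (p - 1), 0`. -/
abbrev padRight {R : Type*} [Zero R] (x : Fin p → R) : Fin (p + 1) → R :=
  Fin.snoc (α := fun _ ↦ R) x 0

/-- The sequence `0, x 0, …, x (p - 1)`. -/
abbrev padLeft {R : Type*} [Zero R] (x : Fin p → R) : Fin (p + 1) → R :=
  Fin.cons (α := fun _ ↦ R) 0 x

/-- The consecutive differences `x 0 - 0, x 1 - x 0, …, 0 - x (p - 1)` of a finite sequence padded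
by a zero at both ends. For the indicator of a block of consecutive indices these are the signed
incidences of the edge from the start of the block to just after its end. -/
def paddedDiff {G : Type*} [AddGroup G] (x : Fin p → G) : Fin (p + 1) → G :=
  padRight x - padLeft x

theorem sum_paddedDiff {G : Type*} [AddCommGroup G] (x : Fin p → G) : ∑ r, paddedDiff x r = 0 := by
  simp only [paddedDiff, Pi.sub_apply, Finset.sum_sub_distrib]
  rw [Fin.sum_univ_castSucc, Fin.sum_univ_succ]
  simp

theorem map_paddedDiff {G H : Type*} [AddGroup G] [AddGroup H] (f : G →+ H) (x : Fin p → G)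
    (r : Fin (p + 1)) : f (paddedDiff x r) = paddedDiff (fun i ↦ f (x i)) r := by
  rw [paddedDiff, Pi.sub_apply, map_sub, paddedDiff, Pi.sub_apply]
  congr 1
  · cases r using Fin.lastCases <;> simp
  · cases r using Fin.cases <;> simp

theorem eq_zero_of_paddedDiff_eq_zero {G : Type*} [AddGroup G] {x : Fin p → G}
    (hx : paddedDiff x = 0) : x = 0 := by
  have hpad : padRight x = padLeft x := sub_eq_zero.1 hx
  have hzero (r : Fin (p + 1)) : padLeft x r = 0 := by
    induction r using Fin.induction with
    | zero => rfl
    | succ i ih =>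
      calc padLeft x i.succ = padRight x i.castSucc := by rw [padRight, Fin.snoc_castSucc]; rfl
        _ = 0 := by rw [hpad, ih]
  exact funext fun i ↦ hzero i.succ

theorem paddedDiff_mem {G : Type*} [AddGroup G] {A : AddSubgroup G} {x : Fin p → G}
    (hx : ∀ i, x i ∈ A) (r : Fin (p + 1)) : paddedDiff x r ∈ A := by
  refine A.sub_mem ?_ ?_
  · cases r using Fin.lastCases <;> simp [hx]
  · cases r using Fin.cases <;> simp [hx]

section ZeroOne

variable {R : Type*} [Zero R] [One R] {x : Fin p → R}

theorem padRight_eq_zero_or_eq_one (h01 : ∀ i, x i = 0 ∨ x i = 1) (r : Fin (p + 1)) :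
    padRight x r = 0 ∨ padRight x r = 1 := by
  cases r using Fin.lastCases <;> simp [h01]

theorem padLeft_eq_zero_or_eq_one (h01 : ∀ i, x i = 0 ∨ x i = 1) (r : Fin (p + 1)) :
    padLeft x r = 0 ∨ padLeft x r = 1 := by
  cases r using Fin.cases <;> simp [h01]

variable [NeZero (1 : R)]

theorem padRight_eq_one_iff {r : Fin (p + 1)} :
    padRight x r = 1 ↔ ∃ i, i.castSucc = r ∧ x i = 1 := by
  cases r using Fin.lastCases <;> simp [Fin.castSucc_ne_last]

theorem padLeft_eq_one_iff {r : Fin (p + 1)} : padLeft x r = 1 ↔ ∃ i, i.succ = r ∧ x i = 1 := by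
  cases r using Fin.cases <;> simp [Fin.succ_ne_zero]

theorem subsingleton_block_start (hx : {i | x i = 1}.OrdConnected) :
    {r | padRight x r = 1 ∧ padLeft x r ≠ 1}.Subsingleton := by
  rw [← Set.not_nontrivial_iff, Set.nontrivial_iff_exists_lt]
  rintro ⟨r, ⟨hr, -⟩, s, ⟨hs, hs'⟩, hlt⟩
  obtain ⟨a, rfl, ha⟩ := padRight_eq_one_iff.1 hr
  obtain ⟨c, hcs, hc⟩ := padRight_eq_one_iff.1 hs
  obtain ⟨b, rfl⟩ := Fin.exists_succ_eq.2 (Fin.ne_zero_of_lt hlt)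
  have hab : a ≤ b := Fin.castSucc_lt_succ_iff.1 hlt
  have hbc : b ≤ c := (Fin.succ_le_castSucc_iff.1 hcs.ge).le
  exact hs' (padLeft_eq_one_iff.2 ⟨b, rfl, hx.out ha hc ⟨hab, hbc⟩⟩)

theorem subsingleton_block_end (hx : {i | x i = 1}.OrdConnected) :
    {r | padRight x r ≠ 1 ∧ padLeft x r = 1}.Subsingleton := by
  rw [← Set.not_nontrivial_iff, Set.nontrivial_iff_exists_lt]
  rintro ⟨r, ⟨hr', hr⟩, s, ⟨-, hs⟩, hlt⟩
  obtain ⟨a, har, ha⟩ := padLeft_eq_one_iff.1 hr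
  obtain ⟨c, rfl, hc⟩ := padLeft_eq_one_iff.1 hs
  obtain ⟨b, rfl⟩ := Fin.exists_castSucc_eq.2 (Fin.ne_last_of_lt hlt)
  have hab : a ≤ b := (Fin.succ_le_castSucc_iff.1 har.le).le
  have hbc : b ≤ c := Fin.castSucc_lt_succ_iff.1 hlt
  exact hr' (padRight_eq_one_iff.2 ⟨b, rfl, hx.out ha hc ⟨hab, hbc⟩⟩)

end ZeroOne

theorem ncard_paddedDiff_ne_zero_le_two {R : Type*} [Ring R] [Nontrivial R] {x : Fin p → R}
    (h01 : ∀ i, x i = 0 ∨ x i = 1) (hx : {i | x i = 1}.OrdConnected) :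
    {r | paddedDiff x r ≠ 0}.ncard ≤ 2 := by
  have hsub : {r | paddedDiff x r ≠ 0} ⊆
      {r | padRight x r = 1 ∧ padLeft x r ≠ 1} ∪ {r | padRight x r ≠ 1 ∧ padLeft x r = 1} := by
    intro r hr
    have hne : padRight x r ≠ padLeft x r := sub_ne_zero.1 hr
    rcases padRight_eq_zero_or_eq_one h01 r with hright | hright <;>
      rcases padLeft_eq_zero_or_eq_one h01 r with hleft | hleft <;> simp_all
  have hstart := Set.ncard_le_one_iff_subsingleton.2 (subsingleton_block_start hx)
  have hend := Set.ncard_le_one_iff_subsingleton.2 (subsingleton_block_end hx)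
  grw [Set.ncard_le_ncard hsub, Set.ncard_union_le, hstart, hend]

theorem paddedDiff_eq_zero_or_eq_one_or_eq_neg_one {R : Type*} [Ring R] {x : Fin p → R}
    (h01 : ∀ i, x i = 0 ∨ x i = 1) (r : Fin (p + 1)) :
    paddedDiff x r = 0 ∨ paddedDiff x r = 1 ∨ paddedDiff x r = -1 := by
  rcases padRight_eq_zero_or_eq_one h01 r with hright | hright <;>
    rcases padLeft_eq_zero_or_eq_one h01 r with hleft | hleft <;>
    simp [paddedDiff, hright, hleft]

/-- The consecutive differences of the rows of a matrix, padded by a zero row at both ends. For an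
interval matrix this is the signed incidence matrix of a graph with the columns as edges. -/
def rowDiff {ι G : Type*} [AddGroup G] (X : Matrix (Fin p) ι G) : Matrix (Fin (p + 1)) ι G :=
  .of (paddedDiff X.row)

theorem rowDiff_apply {ι G : Type*} [AddGroup G] (X : Matrix (Fin p) ι G) (r : Fin (p + 1))
    (j : ι) : rowDiff X r j = paddedDiff (X.col j) r :=
  map_paddedDiff (Pi.evalAddMonoidHom (fun _ ↦ G) j) X.row r

theorem rowDiff_mulVec {ι R : Type*} [Fintype ι] [NonUnitalNonAssocRing R]
    (X : Matrix (Fin p) ι R) (d : ι → R) : rowDiff X *ᵥ d = paddedDiff (X *ᵥ d) :=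
  funext <| map_paddedDiff (AddMonoidHom.mk' (· ⬝ᵥ d) (add_dotProduct · · d)) X.row

end PaddedDiff

theorem mul_mem_of_eq_zero_or_eq_one {R : Type*} [NonAssocSemiring R] {S : Type*} [SetLike S R]
    [AddSubmonoidClass S R] {A : S} {a x : R} (ha : a = 0 ∨ a = 1) (hx : x ∈ A) : a * x ∈ A := by
  rcases ha with rfl | rfl
  · simpa only [zero_mul] using zero_mem A
  · simpa only [one_mul] using hx

theorem submatrix_mulVec_comp {ρ σ ι κ R : Type*} [Fintype ι] [Fintype κ]
    [NonUnitalNonAssocSemiring R] {X : Matrix ρ ι R} {f : σ → ρ} {g : κ → ι}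
    (hg : Function.Injective g) {x : ι → R} (hx : ∀ j ∉ Set.range g, x j = 0) {i : σ} :
    (X.submatrix f g *ᵥ (x ∘ g)) i = (X *ᵥ x) (f i) :=
  Fintype.sum_of_injective g hg _ _ (fun j hj ↦ by rw [hx j hj, mul_zero]) fun _ ↦ rfl

namespace IsIntervalMatrix

theorem ordConnected_col {m n : ℕ} {X : Matrix (Fin m) (Fin n) ℝ} (hX : IsIntervalMatrix X)
    (j : Fin n) : {i | X.col j i = 1}.OrdConnected :=
  ⟨fun _ ha _ hc _ hb ↦ hX.2 j _ _ _ hb.1 hb.2 ha hc⟩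

theorem submatrix {m n p q : ℕ} {X : Matrix (Fin m) (Fin n) ℝ} (hX : IsIntervalMatrix X)
    {f : Fin p → Fin m} (hf : Monotone f) (g : Fin q → Fin n) :
    IsIntervalMatrix (X.submatrix f g) :=
  ⟨fun i j ↦ hX.1 (f i) (g j), fun j _ _ _ hab hbc ↦ hX.2 (g j) _ _ _ (hf hab) (hf hbc)⟩

theorem mulVec_mem {m n : ℕ} {X : Matrix (Fin m) (Fin n) ℝ} (hX : IsIntervalMatrix X)
    {A : AddSubgroup ℝ} {x : Fin n → ℝ} (hx : ∀ j, x j ∈ A) (i : Fin m) : (X *ᵥ x) i ∈ A :=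
  sum_mem (t := Finset.univ) fun j _ ↦ mul_mem_of_eq_zero_or_eq_one (hX.1 i j) (hx j)

theorem submatrix_mulVec_comp_mem {m n : ℕ} {X : Matrix (Fin m) (Fin n) ℝ}
    (hX : IsIntervalMatrix X) {A : AddSubgroup ℝ} {σ κ : Type*} [Fintype κ] {f : σ → Fin m}
    {g : κ → Fin n} (hg : Function.Injective g) {w : Fin n → ℝ}
    (hw : ∀ j ∉ Set.range g, w j ∈ A) {i : σ} (hi : (X *ᵥ w) (f i) ∈ A) :
    (X.submatrix f g *ᵥ (w ∘ g)) i ∈ A := by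
  let u : Fin n → ℝ := (Set.range g)ᶜ.indicator w
  have hu (j : Fin n) : u j ∈ A := by
    by_cases hj : j ∈ Set.range g
    · simp [u, hj]
    · simpa [u, hj] using hw j hj
  have hwu : (w - u) ∘ g = w ∘ g := by ext a; simp [u]
  have hoff (j : Fin n) (hj : j ∉ Set.range g) : (w - u) j = 0 := by
    simp [u, Set.indicator_of_mem (Set.mem_compl hj)]
  rw [← hwu, submatrix_mulVec_comp hg hoff, Matrix.mulVec_sub]
  exact A.sub_mem hi (hX.mulVec_mem hu _)

theorem exists_rowDiff_ne_zero {p q : ℕ} {X : Matrix (Fin p) (Fin q) ℝ}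
    (hX : IsIntervalMatrix X) {A : AddSubgroup ℝ} {w : Fin q → ℝ} (hXw : ∀ i, (X *ᵥ w) i ∈ A)
    {r : Fin (p + 1)} {j : Fin q} (hwj : w j ∉ A) (hj : rowDiff X r j ≠ 0) :
    ∃ j' ≠ j, rowDiff X r j' ≠ 0 := by
  by_contra! hleaf
  have hsingle : (rowDiff X *ᵥ w) r = rowDiff X r j * w j :=
    Fintype.sum_eq_single j fun j' hj' ↦ mul_eq_zero_of_left (hleaf j' hj') _
  have hflow : rowDiff X r j * w j ∈ A := by
    rw [← hsingle, rowDiff_mulVec]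
    exact paddedDiff_mem hXw r
  have hsign : rowDiff X r j = 0 ∨ rowDiff X r j = 1 ∨ rowDiff X r j = -1 := by
    rw [rowDiff_apply]
    exact paddedDiff_eq_zero_or_eq_one_or_eq_neg_one (fun i ↦ hX.1 i j) r
  rcases hsign with h | h | h
  · exact hj h
  · exact hwj (by simpa [h] using hflow)
  · exact hwj (by simpa [h] using hflow)

theorem exists_mulVec_eq_zero {p q : ℕ} [NeZero q] {X : Matrix (Fin p) (Fin q) ℝ}
    (hX : IsIntervalMatrix X) {A : AddSubgroup ℝ} {w : Fin q → ℝ} (hw : ∀ j, w j ∉ A)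
    (hXw : ∀ i, (X *ᵥ w) i ∈ A) : ∃ d ≠ 0, X *ᵥ d = 0 := by
  have hsum (j : Fin q) : ∑ r, rowDiff X r j = 0 := by
    simp only [rowDiff_apply, sum_paddedDiff]
  have hcol (j : Fin q) : {r | rowDiff X r j ≠ 0}.ncard ≤ 2 := by
    simp only [rowDiff_apply]
    exact ncard_paddedDiff_ne_zero_le_two (fun i ↦ hX.1 i j) (hX.ordConnected_col j)
  obtain ⟨d, hd, hXd⟩ := exists_mulVec_eq_zero_of_no_leaf hsum hcol
    fun _ j ↦ hX.exists_rowDiff_ne_zero hXw (hw j)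
  rw [rowDiff_mulVec] at hXd
  exact ⟨d, hd, eq_zero_of_paddedDiff_eq_zero hXd⟩

theorem exists_ne_zero_vanishing_on_mem {m n : ℕ} {X : Matrix (Fin m) (Fin n) ℝ}
    (hX : IsIntervalMatrix X) {A : AddSubgroup ℝ} {w : Fin n → ℝ} (hw : ∃ j, w j ∉ A) :
    ∃ d ≠ 0, (∀ i, (X *ᵥ w) i ∈ A → (X *ᵥ d) i = 0) ∧ ∀ j, w j ∈ A → d j = 0 := by
  classical
  let T : Finset (Fin m) := {i | (X *ᵥ w) i ∈ A}
  let F : Finset (Fin n) := {j | w j ∉ A}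
  let f := T.orderEmbOfFin rfl
  let g := F.orderEmbOfFin rfl
  have hf (i : Fin m) : i ∈ Set.range f ↔ (X *ᵥ w) i ∈ A := by simp [f, T]
  have hg (j : Fin n) : j ∈ Set.range g ↔ w j ∉ A := by simp [g, F]
  have : NeZero F.card := ⟨Finset.card_ne_zero.2 <| by simpa [Finset.Nonempty, F] using hw⟩
  have hmem (i : Fin T.card) : (X.submatrix f g *ᵥ (w ∘ g)) i ∈ A :=
    hX.submatrix_mulVec_comp_mem g.injective (fun j hj ↦ of_not_not fun h ↦ hj ((hg j).2 h))
      ((hf _).1 ⟨i, rfl⟩)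
  obtain ⟨d, hd, hXd⟩ :=
    (hX.submatrix f.monotone g).exists_mulVec_eq_zero (fun a ↦ (hg _).1 ⟨a, rfl⟩) hmem
  let e : Fin n → ℝ := Function.extend g d 0
  have hcomp : e ∘ g = d := Function.extend_comp g.injective d 0
  have hzero (j : Fin n) (hj : j ∉ Set.range g) : e j = 0 := Function.extend_apply' d _ j hj
  refine ⟨e, ?_, fun i hi ↦ ?_, fun j hj ↦ hzero j fun h ↦ (hg j).1 h hj⟩
  · intro h
    exact hd (by rw [← hcomp, h, Pi.zero_comp])
  · obtain ⟨r, rfl⟩ := (hf i).2 hi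
    rw [← submatrix_mulVec_comp g.injective hzero, hcomp, hXd, Pi.zero_apply]

end IsIntervalMatrix

section ExtremePoints

theorem eq_zero_of_mem_extremePoints_of_eventually_add_smul_mem {E : Type*} [AddCommGroup E]
    [Module ℝ E] {P : Set E} {w d : E} (hw : w ∈ P.extremePoints ℝ)
    (hd : ∀ᶠ ε : ℝ in 𝓝 0, w + ε • d ∈ P) : d = 0 := by
  have hd' : ∀ᶠ ε : ℝ in 𝓝 0, w + -ε • d ∈ P :=
    (continuous_neg.tendsto' (0 : ℝ) 0 neg_zero).eventually hd
  obtain ⟨ε, ⟨hplus, hminus⟩, hε⟩ : ∃ ε : ℝ, (w + ε • d ∈ P ∧ w + -ε • d ∈ P) ∧ 0 < ε :=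
    (((hd.and hd').filter_mono nhdsWithin_le_nhds).and
      (eventually_mem_nhdsWithin (s := .Ioi 0))).exists
  have hmid : w ∈ openSegment ℝ (w + ε • d) (w + -ε • d) :=
    ⟨1 / 2, 1 / 2, by norm_num, by norm_num, by norm_num, by module⟩
  have hfix : w + ε • d = w := mem_extremePoints_iff_left.1 hw |>.2 _ hplus _ hminus hmid
  exact (smul_eq_zero.1 (add_eq_left.1 hfix)).resolve_left hε.ne'

theorem eventually_le_add_mul_of_tight {a b c : ℝ} (hle : b ≤ a) (htight : a = b → c = 0) :
    ∀ᶠ ε in 𝓝 (0 : ℝ), b ≤ a + ε * c := by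
  rcases hle.eq_or_lt with heq | hlt
  · simp [htight heq.symm, hle]
  · have hcont : Tendsto (fun ε ↦ a + ε * c) (𝓝 0) (𝓝 a) :=
      Continuous.tendsto' (by fun_prop) _ _ (by simp)
    exact (hcont.eventually_const_lt hlt).mono fun _ ↦ le_of_lt

theorem eventually_add_mul_le_of_tight {a b c : ℝ} (hle : a ≤ b) (htight : a = b → c = 0) :
    ∀ᶠ ε in 𝓝 (0 : ℝ), a + ε * c ≤ b := by
  have hneg := eventually_le_add_mul_of_tight (neg_le_neg hle) (c := -c) (by simpa using htight)
  filter_upwards [hneg] with ε hε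
  linarith

end ExtremePoints

theorem eq_zero_or_eq_one_of_mem_range_intCast {x : ℝ} (hx : x ∈ (Int.castAddHom ℝ).range)
    (hx01 : 0 ≤ x ∧ x ≤ 1) : x = 0 ∨ x = 1 := by
  obtain ⟨z, rfl⟩ := hx
  obtain ⟨h0, h1⟩ := hx01
  simp only [Int.coe_castAddHom] at h0 h1 ⊢
  norm_cast at h0 h1 ⊢
  lia

theorem intervalMatrix_polyhedron_extremePoints_binary_general {m n : ℕ}
    {X : Matrix (Fin m) (Fin n) ℝ} (hX : IsIntervalMatrix X) (A : AddSubgroup ℝ)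
    {b : Fin m → ℝ} {l u c : Fin n → ℝ} (hb : ∀ i, b i ∈ A) (hl : ∀ j, l j ∈ A)
    (hu : ∀ j, u j ∈ A) (hc : ∀ j, c j ∈ A) :
    ∀ w ∈ Set.extremePoints ℝ
      {w : Fin n → ℝ |
        (∀ i, b i ≤ ∑ j, X i j * w j) ∧ (∀ j, l j ≤ w j ∧ w j ≤ u j) ∧ (∀ j, w j ≤ c j)},
      ∀ j, w j ∈ A := by
  intro w hw
  by_contra! hfrac
  obtain ⟨hXw, hbox, hwc⟩ := hw.1
  obtain ⟨d, hd, hXd, hdA⟩ := hX.exists_ne_zero_vanishing_on_mem hfrac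
  have hfix {x : Fin n → ℝ} (hx : ∀ j, x j ∈ A) (j : Fin n) (h : w j = x j) : d j = 0 :=
    hdA j (h ▸ hx j)
  have hrows : ∀ᶠ ε in 𝓝 (0 : ℝ), ∀ i, b i ≤ (X *ᵥ (w + ε • d)) i := by
    simp only [Matrix.mulVec_add, Matrix.mulVec_smul, Pi.add_apply, Pi.smul_apply, smul_eq_mul]
    exact eventually_all.2 fun i ↦
      eventually_le_add_mul_of_tight (hXw i) fun h ↦ hXd i (Set.mem_of_eq_of_mem h (hb i))
  refine hd (eq_zero_of_mem_extremePoints_of_eventually_add_smul_mem hw (hrows.and (.and ?_ ?_)))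
  · exact eventually_all.2 fun j ↦
      (eventually_le_add_mul_of_tight (hbox j).1 (hfix hl j)).and
        (eventually_add_mul_le_of_tight (hbox j).2 (hfix hu j))
  · exact eventually_all.2 fun j ↦ eventually_add_mul_le_of_tight (hwc j) (hfix hc j)

/-- Every extreme point of the polyhedron
`P = {w : X w ≥ v·𝟙, 0 ≤ w ≤ 𝟙, w ≤ V t}`, where `X` is an interval 0–1 matrix, `V` is a
0–1 matrix with exactly one 1 per row, `t` is an integer vector and `v` an integer, has
all coordinates in `{0,1}`. -/
theorem intervalMatrix_polyhedron_extremePoints_binary {m n k : ℕ}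
    (X : Matrix (Fin m) (Fin n) ℝ) (hX : IsIntervalMatrix X)
    (V : Matrix (Fin n) (Fin k) ℝ)
    (hV01 : ∀ j l, V j l = 0 ∨ V j l = 1)
    (hVrow : ∀ j : Fin n, ∃! l : Fin k, V j l = 1)
    (t : Fin k → ℤ) (v : ℤ) :
    ∀ w ∈ Set.extremePoints ℝ
      {w : Fin n → ℝ |
        (∀ i : Fin m, (v : ℝ) ≤ ∑ j, X i j * w j) ∧
        (∀ j : Fin n, 0 ≤ w j ∧ w j ≤ 1) ∧
        (∀ j : Fin n, w j ≤ ∑ l, V j l * (t l : ℝ))},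
      ∀ j : Fin n, w j = 0 ∨ w j = 1 := by
  intro w hw j
  have hint := intervalMatrix_polyhedron_extremePoints_binary_general hX (Int.castAddHom ℝ).range
    (fun _ ↦ ⟨v, rfl⟩) (fun _ ↦ zero_mem _) (fun _ ↦ ⟨1, Int.cast_one⟩)
    (fun j ↦ sum_mem fun l _ ↦ mul_mem_of_eq_zero_or_eq_one (hV01 j l) ⟨t l, rfl⟩) w hw j
  exact eq_zero_or_eq_one_of_mem_range_intCast hint (hw.1.2.1 j)
end
end

section
/- Let w be a finite word of length n ≥ 1 over an arbitrary alphabet. For each nonempty factor (contiguous substring) s of w, let E(s) ⊆ {1, …, n} be the set of positions at which an occurrence of s in w ends. Then the number of distinct sets E(s), as s ranges over all nonempty factors of w, is at most 2n − 1. -/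
noncomputable section

/-- The set of ending positions (in `{1, …, n}`) of occurrences of the factor `s`
in the word `w`: position `j` is an end position if `s = c_{j−|s|+1} ⋯ c_j`. -/
def endSet {α : Type*} (w s : List α) : Set ℕ :=
  {j : ℕ | s.length ≤ j ∧ j ≤ w.length ∧ (w.take j).drop (j - s.length) = s}

/-!
Two factors with a common ending position are both suffixes of the same prefix of `w`, so one of
them is a suffix of the other and their ending-position sets are nested. Hence these sets form a
laminar family of nonempty subsets of `{1, …, n}`. Such a family has at most `2n - 1` members: set
the whole ground set aside, and let `A` be a maximal remaining member; the others lie inside `A` or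
inside its complement, so by induction there are at most
`(2|A| - 1) + (2(n - |A|) - 1) = 2n - 2` of them.
-/

/-- A laminar family of sets: any two members are disjoint or nested. The bound on the number of
ending-position sets is the bound on the size of a laminar family of nonempty sets. -/
def IsLaminar {β : Type*} (F : Set (Set β)) : Prop :=
  ∀ A ∈ F, ∀ B ∈ F, Disjoint A B ∨ A ⊆ B ∨ B ⊆ A

namespace IsLaminar

variable {β : Type*}

theorem mono {F G : Set (Set β)} (hG : IsLaminar G) (hFG : F ⊆ G) : IsLaminar F :=
  fun A hA B hB => hG A (hFG hA) B (hFG hB)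

theorem inter_powerset_union_inter_powerset_compl {F : Set (Set β)} {A : Set β}
    (hF : IsLaminar F) (hA : Maximal (· ∈ F) A) : F ∩ 𝒫 A ∪ F ∩ 𝒫 Aᶜ = F := by
  refine Set.Subset.antisymm (Set.union_subset Set.inter_subset_left Set.inter_subset_left) ?_
  intro B hB
  rcases hF B hB A hA.prop with hdisj | hBA | hAB
  · exact Or.inr ⟨hB, Set.subset_compl_iff_disjoint_right.2 hdisj⟩
  · exact Or.inl ⟨hB, hBA⟩
  · exact Or.inl ⟨hB, hA.le_of_ge hB hAB⟩

theorem ncard_lt_two_mul_ncard {F : Set (Set β)} {U : Set β} (hF : IsLaminar F)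
    (hUfin : U.Finite) (hU : U.Nonempty) (hne : ∀ B ∈ F, B.Nonempty) (hsub : ∀ B ∈ F, B ⊆ U) :
    F.ncard < 2 * U.ncard := by
  have hU_pos : 0 < U.ncard := (Set.ncard_pos hUfin).2 hU
  have hF_le : F.ncard ≤ (F \ {U}).ncard + 1 :=
    Nat.sub_le_iff_le_add.1 (Set.pred_ncard_le_ncard_sdiff_singleton F U)
  rcases (F \ {U}).eq_empty_or_nonempty with hempty | hnonempty
  · rw [hempty, Set.ncard_empty] at hF_le
    lia
  have hfin : (F \ {U}).Finite := hUfin.finite_subsets.subset fun B hB => hsub B hB.1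
  obtain ⟨A, hA⟩ := hfin.exists_maximal hnonempty
  have hAU : A ⊂ U := (hsub A hA.prop.1).ssubset_of_ne hA.prop.2
  have hAfin : A.Finite := hUfin.subset hAU.subset
  have hA_nonempty : A.Nonempty := hne A hA.prop.1
  have hcard_sdiff : (U \ A).ncard + A.ncard = U.ncard :=
    Set.ncard_sdiff_add_ncard_of_subset hAU.subset hUfin
  have hlam : IsLaminar (F \ {U}) := hF.mono Set.sdiff_subset
  have hinside : ((F \ {U}) ∩ 𝒫 A).ncard < 2 * A.ncard :=
    ncard_lt_two_mul_ncard (hlam.mono Set.inter_subset_left) hAfin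
      hA_nonempty (fun B hB => hne B hB.1.1) (fun B hB => hB.2)
  have houtside : ((F \ {U}) ∩ 𝒫 Aᶜ).ncard < 2 * (U \ A).ncard :=
    ncard_lt_two_mul_ncard (hlam.mono Set.inter_subset_left) hUfin.sdiff
      (Set.nonempty_of_ssubset hAU) (fun B hB => hne B hB.1.1)
      (fun B hB => Set.subset_inter (hsub B hB.1.1) hB.2)
  have hsplit : (F \ {U}).ncard ≤ ((F \ {U}) ∩ 𝒫 A).ncard + ((F \ {U}) ∩ 𝒫 Aᶜ).ncard := by
    conv_lhs => rw [← hlam.inter_powerset_union_inter_powerset_compl hA]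
    exact Set.ncard_union_le _ _
  lia
termination_by U.ncard
decreasing_by
  · exact Set.ncard_lt_ncard hAU hUfin
  · have hA_pos : 0 < A.ncard := (Set.ncard_pos hAfin).2 hA_nonempty
    lia

end IsLaminar

section EndSet

variable {α : Type*} {w s t : List α} {j : ℕ}

theorem mem_endSet_iff : j ∈ endSet w s ↔ j ≤ w.length ∧ s <:+ w.take j := by
  constructor
  · rintro ⟨-, hj, hs⟩
    exact ⟨hj, hs ▸ List.drop_suffix _ _⟩
  · rintro ⟨hj, hs⟩
    have hlen : (w.take j).length = j := List.length_take_of_le hj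
    have hdrop := List.suffix_iff_eq_drop.1 hs
    rw [hlen] at hdrop
    exact ⟨hlen ▸ hs.length_le, hj, hdrop.symm⟩

theorem endSet_subset_endSet_of_suffix (w : List α) (hst : s <:+ t) :
    endSet w t ⊆ endSet w s := by
  intro j hj
  rw [mem_endSet_iff] at hj ⊢
  exact ⟨hj.1, hst.trans hj.2⟩

theorem isLaminar_range_endSet (w : List α) : IsLaminar (Set.range (endSet w)) := by
  rintro _ ⟨s, rfl⟩ _ ⟨t, rfl⟩
  refine or_iff_not_imp_left.2 fun hmeet => ?_
  obtain ⟨j, hjs, hjt⟩ := Set.not_disjoint_iff.1 hmeet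
  rcases List.suffix_or_suffix_of_suffix (mem_endSet_iff.1 hjs).2 (mem_endSet_iff.1 hjt).2
    with hst | hts
  · exact Or.inr (endSet_subset_endSet_of_suffix w hst)
  · exact Or.inl (endSet_subset_endSet_of_suffix w hts)

theorem endSet_nonempty (hs : s <:+: w) : (endSet w s).Nonempty := by
  obtain ⟨a, b, rfl⟩ := hs
  refine ⟨(a ++ s).length, mem_endSet_iff.2 ⟨by simp, ?_⟩⟩
  rw [List.take_left]
  exact List.suffix_append a s

theorem endSet_subset_Icc (w : List α) (hs : s ≠ []) : endSet w s ⊆ Set.Icc 1 w.length :=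
  fun _ hj => ⟨(List.length_pos_iff.2 hs).trans_le hj.1, hj.2.1⟩

end EndSet

/-- For a word `w` of length `n ≥ 1`, the number of distinct ending-position sets
`E(s)`, as `s` ranges over all nonempty factors (contiguous substrings) of `w`,
is at most `2n − 1`. -/
theorem card_endSets_le {α : Type*} (w : List α) (hw : 1 ≤ w.length) :
    {E : Set ℕ | ∃ s : List α, s ≠ [] ∧ s <:+: w ∧ E = endSet w s}.Finite ∧
    {E : Set ℕ | ∃ s : List α, s ≠ [] ∧ s <:+: w ∧ E = endSet w s}.ncard ≤
      2 * w.length - 1 := by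
  set F : Set (Set ℕ) := {E | ∃ s : List α, s ≠ [] ∧ s <:+: w ∧ E = endSet w s}
  have hlam : IsLaminar F := (isLaminar_range_endSet w).mono <| by
    rintro _ ⟨s, -, -, rfl⟩
    exact Set.mem_range_self s
  have hne : ∀ E ∈ F, E.Nonempty := by
    rintro _ ⟨s, -, hsw, rfl⟩
    exact endSet_nonempty hsw
  have hsub : ∀ E ∈ F, E ⊆ Set.Icc 1 w.length := by
    rintro _ ⟨s, hs, -, rfl⟩
    exact endSet_subset_Icc w hs
  have hcard_Icc : (Set.Icc 1 w.length).ncard = w.length := by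
    rw [Set.ncard_eq_toFinset_card', Set.toFinset_Icc, Nat.card_Icc, Nat.add_sub_cancel]
  have hcard : F.ncard < 2 * w.length := by
    simpa only [hcard_Icc] using
      hlam.ncard_lt_two_mul_ncard (Set.finite_Icc 1 w.length) (Set.nonempty_Icc.2 hw) hne hsub
  exact ⟨(Set.finite_Icc 1 w.length).finite_subsets.subset hsub, Nat.le_sub_one_of_lt hcard⟩
end
end
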